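/- Let α : H →* G and β : K →* G be surjective group homomorphisms, and let L = {(h, k) : H × K // α h = β k} be the pullback subgroup of H × K, with projection homomorphisms δ : L →* H and γ : L →* K. Then: (1) δ and γ are surjective; (2) the join (ker δ) ⊔ (ker γ) of the kernels of the projections equals the subgroup {(h, k) ∈ L | α h = 1 ∧ β k = 1}; and (3) the homomorphism λ : L →* G defined by λ(h, k) = α h is surjective with kernel (ker δ) ⊔ (ker γ), so that L ⧸ ((ker δ) ⊔ (ker γ)) ≃* G. -/

import Mathlib

/-!
The condition `α h = β k` makes the kernel of `(h, k) ↦ α h` on the pullback equal to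
`{(h, k) | α h = 1 ∧ β k = 1}`. For such a pair both `(h, 1)` and `(1, k)` already lie in the
pullback, so `(h, k) = (1, k) * (h, 1)` is a product of an element of `ker δ` and an element of
`ker γ`.
-/

section

variable {H K G : Type*} [Group H] [Group K] [Group G]

/-- The pullback group of two homomorphisms `α : H →* G`, `β : K →* G`: the subgroup
`{(h, k) : H × K // α h = β k}` of `H × K`. -/
def pullbackSubgroup (α : H →* G) (β : K →* G) : Subgroup (H × K) where
  carrier := {p | α p.1 = β p.2}
  one_mem' := by simp
  mul_mem' := by
    intro a b ha hb
    simp only [Set.mem_setOf_eq, Prod.fst_mul, Prod.snd_mul, map_mul] at *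
    rw [ha, hb]
  inv_mem' := by
    intro a ha
    simp only [Set.mem_setOf_eq, Prod.fst_inv, Prod.snd_inv, map_inv] at *
    rw [ha]

/-- The projection `L →* H` from the pullback group. -/
def pullbackFst (α : H →* G) (β : K →* G) : ↥(pullbackSubgroup α β) →* H :=
  (MonoidHom.fst H K).comp (pullbackSubgroup α β).subtype

/-- The projection `L →* K` from the pullback group. -/
def pullbackSnd (α : H →* G) (β : K →* G) : ↥(pullbackSubgroup α β) →* K :=
  (MonoidHom.snd H K).comp (pullbackSubgroup α β).subtype

/-- The subgroup `{(h, k) ∈ L | α h = 1 ∧ β k = 1}` of the pullback group `L`. -/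
def pullbackKerSubgroup (α : H →* G) (β : K →* G) : Subgroup ↥(pullbackSubgroup α β) where
  carrier := {p | α (p : H × K).1 = 1 ∧ β (p : H × K).2 = 1}
  one_mem' := by simp
  mul_mem' := by
    rintro ⟨⟨h1, k1⟩, _⟩ ⟨⟨h2, k2⟩, _⟩ ⟨ha1, ha2⟩ ⟨hb1, hb2⟩
    exact ⟨by simp [map_mul, ha1, hb1], by simp [map_mul, ha2, hb2]⟩
  inv_mem' := by
    rintro ⟨⟨h1, k1⟩, _⟩ ⟨ha1, ha2⟩
    exact ⟨by simp [ha1], by simp [ha2]⟩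

section

variable (α : H →* G) (β : K →* G)

variable {α β} in
theorem mem_pullbackSubgroup {p : H × K} : p ∈ pullbackSubgroup α β ↔ α p.1 = β p.2 :=
  Iff.rfl

variable {β} in
theorem pullbackFst_surjective (hβ : Function.Surjective β) :
    Function.Surjective (pullbackFst α β) := fun h =>
  let ⟨k, hk⟩ := hβ (α h)
  ⟨⟨(h, k), mem_pullbackSubgroup.2 hk.symm⟩, rfl⟩

variable {α} in
theorem pullbackSnd_surjective (hα : Function.Surjective α) :
    Function.Surjective (pullbackSnd α β) := fun k =>
  let ⟨h, hh⟩ := hα (β k)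
  ⟨⟨(h, k), mem_pullbackSubgroup.2 hh⟩, rfl⟩

theorem comp_pullbackFst_eq_comp_pullbackSnd :
    α.comp (pullbackFst α β) = β.comp (pullbackSnd α β) :=
  MonoidHom.ext fun p => mem_pullbackSubgroup.1 p.2

theorem pullbackKerSubgroup_eq_ker_comp_inf_ker_comp :
    pullbackKerSubgroup α β = (α.comp (pullbackFst α β)).ker ⊓ (β.comp (pullbackSnd α β)).ker :=
  rfl

theorem ker_comp_pullbackFst : (α.comp (pullbackFst α β)).ker = pullbackKerSubgroup α β := by
  rw [pullbackKerSubgroup_eq_ker_comp_inf_ker_comp, ← comp_pullbackFst_eq_comp_pullbackSnd,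
    inf_idem]

theorem ker_comp_pullbackSnd : (β.comp (pullbackSnd α β)).ker = pullbackKerSubgroup α β := by
  rw [← comp_pullbackFst_eq_comp_pullbackSnd, ker_comp_pullbackFst]

theorem pullbackKerSubgroup_le_ker_sup_ker :
    pullbackKerSubgroup α β ≤ (pullbackFst α β).ker ⊔ (pullbackSnd α β).ker := by
  rintro ⟨⟨h, k⟩, hhk⟩ ⟨hh : α h = 1, hk : β k = 1⟩
  let x : pullbackSubgroup α β := ⟨(1, k), by simp [mem_pullbackSubgroup, hk]⟩
  let y : pullbackSubgroup α β := ⟨(h, 1), by simp [mem_pullbackSubgroup, hh]⟩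
  have hx : x ∈ (pullbackFst α β).ker := MonoidHom.mem_ker.2 rfl
  have hy : y ∈ (pullbackSnd α β).ker := MonoidHom.mem_ker.2 rfl
  have hxy : x * y = ⟨(h, k), hhk⟩ := by ext <;> simp [x, y]
  exact hxy ▸ Subgroup.mul_mem_sup hx hy

theorem ker_pullbackFst_sup_ker_pullbackSnd :
    (pullbackFst α β).ker ⊔ (pullbackSnd α β).ker = pullbackKerSubgroup α β := by
  refine le_antisymm (sup_le ?_ ?_) (pullbackKerSubgroup_le_ker_sup_ker α β)
  · rw [← ker_comp_pullbackFst, ← MonoidHom.comap_ker]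
    exact MonoidHom.ker_le_comap _ _
  · rw [← ker_comp_pullbackSnd, ← MonoidHom.comap_ker]
    exact MonoidHom.ker_le_comap _ _

end

/-- For surjective homomorphisms `α : H ↠ G` and `β : K ↠ G` with pullback group
`L = {(h, k) | α h = β k}`: the two projections `δ : L →* H` and `γ : L →* K` are
surjective; the join of their kernels is `{(h, k) ∈ L | α h = 1 ∧ β k = 1}`; and the
homomorphism `λ(h, k) = α h` is surjective with kernel `ker δ ⊔ ker γ`, so that
`L ⧸ (ker δ ⊔ ker γ) ≃* G`. -/
theorem pullback_projections_surjective_ker_join (α : H →* G) (β : K →* G)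
    (hα : Function.Surjective α) (hβ : Function.Surjective β) :
    Function.Surjective (pullbackFst α β) ∧ Function.Surjective (pullbackSnd α β) ∧
    (pullbackFst α β).ker ⊔ (pullbackSnd α β).ker = pullbackKerSubgroup α β ∧
    Function.Surjective (α.comp (pullbackFst α β)) ∧
    (α.comp (pullbackFst α β)).ker = (pullbackFst α β).ker ⊔ (pullbackSnd α β).ker ∧
    Nonempty ((↥(pullbackSubgroup α β) ⧸ (α.comp (pullbackFst α β)).ker) ≃* G) := by
  have hδ := pullbackFst_surjective α hβ
  have hker := ker_pullbackFst_sup_ker_pullbackSnd α β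
  have hsurj : Function.Surjective (α.comp (pullbackFst α β)) := hα.comp hδ
  exact ⟨hδ, pullbackSnd_surjective β hα, hker, hsurj, (ker_comp_pullbackFst α β).trans hker.symm,
    ⟨QuotientGroup.quotientKerEquivOfSurjective _ hsurj⟩⟩

end
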